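/- Suppose the second derivatives of g are uniformly bounded: |∂²g/∂x_i∂x_j (x)| ≤ L_{ij} ≤ √(L_i L_j) for all x, and ‖∇g(x) − ∇g(y)‖ ≤ L‖x − y‖ for all x, y. If the cyclic coordinate gradient descent stepsize parameters satisfy P_k ≥ L_max := max_j L_j for all k, then for all r ≥ 1, g(x^{(r)}) − g(x*) ≤ 2 ( P_max + min{ K L², (Σ_{k=1}^K L_k)² } / P_min ) R_0² / r. -/

import Mathlib

open Finset

/-- Squared Euclidean norm of a vector in `ℝ^n`. -/
noncomputable def sqnorm {n : ℕ} (v : Fin n → ℝ) : ℝ := ∑ i, v i ^ 2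

/-- The partial derivative `∂_k g (x)`. -/
noncomputable def pder {K : ℕ} (g : (Fin K → ℝ) → ℝ) (k : Fin K) (x : Fin K → ℝ) : ℝ :=
  fderiv ℝ g x (Pi.single k 1)

/-- The second partial derivative `∂²g/∂x_i∂x_j (x) = ∂_i (∂_j g) (x)`. -/
noncomputable def pder2 {K : ℕ} (g : (Fin K → ℝ) → ℝ) (i j : Fin K) (x : Fin K → ℝ) : ℝ :=
  fderiv ℝ (fun y => fderiv ℝ g y (Pi.single j 1)) x (Pi.single i 1)

/-- One cycle of cyclic coordinate gradient descent (CGD) from `x` with stepsizes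
`1/P_k`: `w_1 = x`, `w_{k+1} = w_k − (1/P_k) ∂_k g(w_k) e_k`, and `x' = w_{K+1}`. -/
def CGDCycle {K : ℕ} (g : (Fin K → ℝ) → ℝ) (P : Fin K → ℝ)
    (x : Fin K → ℝ) (w : Fin (K + 1) → Fin K → ℝ) (x' : Fin K → ℝ) : Prop :=
  w 0 = x ∧
  (∀ k : Fin K, w k.succ =
    w k.castSucc - ((P k)⁻¹ * pder g k (w k.castSucc)) • (Pi.single k 1 : Fin K → ℝ)) ∧
  x' = w (Fin.last K)

/-- Maximum of a finite family of reals indexed by `Fin K`, `K ≥ 1`. -/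
noncomputable def maxOf {K : ℕ} (hK : 1 ≤ K) (P : Fin K → ℝ) : ℝ :=
  Finset.univ.sup' (Finset.univ_nonempty_iff.mpr ⟨⟨0, hK⟩⟩) P

/-- Minimum of a finite family of reals indexed by `Fin K`, `K ≥ 1`. -/
noncomputable def minOf {K : ℕ} (hK : 1 ≤ K) (P : Fin K → ℝ) : ℝ :=
  Finset.univ.inf' (Finset.univ_nonempty_iff.mpr ⟨⟨0, hK⟩⟩) P

/-- Spectral (ℓ2 operator) norm of a real `K × K` matrix, characterized as the
maximum of `‖Hv‖` over unit vectors `v`. -/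
noncomputable def specNorm {K : ℕ} (H : Matrix (Fin K) (Fin K) ℝ) : ℝ :=
  sSup {r : ℝ | ∃ v : Fin K → ℝ, sqnorm v = 1 ∧ r = Real.sqrt (sqnorm (H.mulVec v))}

/-- The "moving-iterate Hessian" `H(ξ)`: the strictly lower triangular matrix
whose `(k,j)` entry, for `j < k`, is `∂²g/∂x_k∂x_j (ξ_k)`, and `0` otherwise. -/
noncomputable def Hmat {K : ℕ} (g : (Fin K → ℝ) → ℝ) (ξ : Fin K → Fin K → ℝ) :
    Matrix (Fin K) (Fin K) ℝ :=
  Matrix.of fun k j => if j < k then pder2 g k j (ξ k) else 0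

/-!
One cycle from `x` to `x'` gives two inequalities in the weighted norm `‖v‖_P² = ∑ P_k v_k²`, with
`Q = ‖x' - x‖_P²`. Coordinatewise descent gives `Q / 2 ≤ g x - g x'`. Since
`∂_k g (w_k) = P_k (x_k - x'_k)`, convexity and a polarization identity give
`g x' - g z ≤ (‖x - z‖_P² - ‖x' - z‖_P² - Q) / 2 + X`, where `X` is the error from evaluating the
partial derivatives at the intermediate iterates `w_k` instead of at `x'`, and
`X² ≤ M Q R₀² / P_min`, with `M` such that moving the points of evaluation by at most `ρ` moves the
vector of partial derivatives by at most `√M ρ`.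
Adding `s (s + 1) / 2` times the first inequality to `s + 1` times the second, the `Q` terms absorb
`(s + 1) X` up to the constant `M R₀² / P_min`, so that
`s (s + 1) / 2 * (g (x_s) - g z) + s / 2 * ‖x_s - z‖_P²` grows at most linearly in `s`.
-/

section NormedSpace

variable {E : Type*} [NormedAddCommGroup E] [NormedSpace ℝ E] {f : E → ℝ}

lemma hasDerivAt_comp_add_smul {x v : E} {t : ℝ} (hf : DifferentiableAt ℝ f (x + t • v)) :
    HasDerivAt (fun s : ℝ => f (x + s • v)) (fderiv ℝ f (x + t • v) v) t := by
  have hline : HasDerivAt (fun s : ℝ => x + s • v) v t := by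
    simpa using ((hasDerivAt_id t).smul_const v).const_add x
  exact hf.hasFDerivAt.comp_hasDerivAt t hline

lemma sub_le_fderiv_of_convexOn_univ (hfc : ConvexOn ℝ Set.univ f) {x : E}
    (hf : DifferentiableAt ℝ f x) (y : E) : f x - f y ≤ fderiv ℝ f x (x - y) := by
  have hconv : ConvexOn ℝ Set.univ fun s : ℝ => f (x + s • (y - x)) := by
    simpa [Function.comp_def, AffineMap.lineMap_apply, add_comm] using
      hfc.comp_affineMap (AffineMap.lineMap x y : ℝ →ᵃ[ℝ] E)
  have hslope := hconv.le_slope_of_hasDerivAt (Set.mem_univ 0) (Set.mem_univ 1) one_pos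
    (hasDerivAt_comp_add_smul (v := y - x) (by simpa using hf))
  simp only [zero_smul, add_zero, slope_def_field, one_smul, add_sub_cancel, sub_zero,
    div_one] at hslope
  rw [← neg_sub y x, map_neg]
  linarith

lemma le_add_fderiv_add_half {x v : E} {C : ℝ} (hf : Differentiable ℝ f)
    (hC : ∀ s ∈ Set.Ico (0 : ℝ) 1, |fderiv ℝ f (x + s • v) v - fderiv ℝ f x v| ≤ C * s) :
    f (x + v) ≤ f x + fderiv ℝ f x v + C / 2 := by
  have hderiv (s : ℝ) : HasDerivAt (fun s : ℝ => f (x + s • v) - (f x + s * fderiv ℝ f x v))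
      (fderiv ℝ f (x + s • v) v - fderiv ℝ f x v) s := by
    simpa using (hasDerivAt_comp_add_smul (hf (x + s • v))).fun_sub
      (((hasDerivAt_id s).mul_const (fderiv ℝ f x v)).const_add (f x))
  have hquad (s : ℝ) : HasDerivAt (fun s : ℝ => C / 2 * s ^ 2) (C * s) s :=
    ((hasDerivAt_pow 2 s).const_mul (C / 2)).congr_deriv (by push_cast; ring)
  have hbound := image_norm_le_of_norm_deriv_right_le_deriv_boundary (a := 0) (b := 1)
    (fun s _ => (hderiv s).continuousAt.continuousWithinAt)
    (fun s _ => (hderiv s).hasDerivWithinAt) (by simp) hquad hC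
    (Set.right_mem_Icc.2 zero_le_one)
  simp only [one_smul, one_mul, one_pow, mul_one, Real.norm_eq_abs] at hbound
  linarith [le_abs_self (f (x + v) - (f x + fderiv ℝ f x v))]

end NormedSpace

section PartialDerivatives

variable {K : ℕ} {g : (Fin K → ℝ) → ℝ}

lemma sqnorm_nonneg (v : Fin K → ℝ) : 0 ≤ sqnorm v :=
  sum_nonneg fun _ _ => sq_nonneg _

lemma fderiv_eq_sum_pder (g : (Fin K → ℝ) → ℝ) (x v : Fin K → ℝ) :
    fderiv ℝ g x v = ∑ k, v k * pder g k x := by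
  have hv : v = ∑ k, v k • (Pi.single k 1 : Fin K → ℝ) := by
    simp only [← Pi.single_smul', smul_eq_mul, mul_one, univ_sum_single]
  conv_lhs => rw [hv]
  simp only [map_sum, map_smul, smul_eq_mul, pder]

lemma differentiable_pder (hg : ContDiff ℝ 2 g) (k : Fin K) : Differentiable ℝ (pder g k) :=
  ((hg.fderiv_right (m := 1) (by norm_num)).clm_apply contDiff_const).differentiable one_ne_zero

lemma abs_pder_sub_le (hg : ContDiff ℝ 2 g) {k : Fin K} {B : Fin K → ℝ}
    (hB : ∀ j x, |pder2 g j k x| ≤ B j) (x y : Fin K → ℝ) :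
    |pder g k y - pder g k x| ≤ ∑ j, |y j - x j| * B j := by
  obtain ⟨ξ, -, hξ⟩ := domain_mvt (s := Set.univ)
    (fun z _ => (differentiable_pder hg k z).hasFDerivAt.hasFDerivWithinAt) convex_univ
    (Set.mem_univ x) (Set.mem_univ y)
  rw [hξ, fderiv_eq_sum_pder]
  refine (abs_sum_le_sum_abs _ _).trans (sum_le_sum fun j _ => ?_)
  rw [abs_mul]
  exact mul_le_mul_of_nonneg_left (hB j ξ) (abs_nonneg _)

lemma sq_pder_sub_le (hg : ContDiff ℝ 2 g) {k : Fin K} {B : Fin K → ℝ}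
    (hB : ∀ j x, |pder2 g j k x| ≤ B j) (x y : Fin K → ℝ) :
    (pder g k y - pder g k x) ^ 2 ≤ (∑ j, B j ^ 2) * sqnorm (y - x) := calc
  (pder g k y - pder g k x) ^ 2 ≤ (∑ j, |y j - x j| * B j) ^ 2 := by
    simpa only [sq_abs] using pow_le_pow_left₀ (abs_nonneg _) (abs_pder_sub_le hg hB x y) 2
  _ ≤ (∑ j, |y j - x j| ^ 2) * ∑ j, B j ^ 2 := sum_mul_sq_le_sq_mul_sq _ _ _
  _ = (∑ j, B j ^ 2) * sqnorm (y - x) := by simp only [sq_abs, sqnorm, Pi.sub_apply, mul_comm]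

lemma apply_eq_of_pder2_eq_zero (hg : ContDiff ℝ 2 g) (hH : ∀ i j x, pder2 g i j x = 0)
    {z : Fin K → ℝ} (hz : IsLocalMin g z) (x y : Fin K → ℝ) : g x = g y := by
  refine is_const_of_fderiv_eq_zero (hg.differentiable two_ne_zero) (fun u => ?_) x y
  have hpder (k : Fin K) : pder g k u = 0 := by
    have hconst := abs_pder_sub_le hg (k := k) (B := 0) (fun j x => by simp [hH]) z u
    have hcrit : pder g k z = 0 := by simp [pder, hz.fderiv_eq_zero]
    simpa [hcrit] using hconst
  ext v
  simp [fderiv_eq_sum_pder, hpder]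

lemma apply_add_smul_single_le (hg : Differentiable ℝ g) {k : Fin K} {L : ℝ} {x : Fin K → ℝ}
    (hL : ∀ t : ℝ, |pder g k (x + t • (Pi.single k 1 : Fin K → ℝ)) - pder g k x| ≤ L * |t|)
    (t : ℝ) :
    g (x + t • (Pi.single k 1 : Fin K → ℝ)) ≤ g x + t * pder g k x + L / 2 * t ^ 2 := by
  have hmodel := le_add_fderiv_add_half (x := x) (v := t • (Pi.single k 1 : Fin K → ℝ))
    (C := L * t ^ 2) hg fun s hs => by
      rw [map_smul, map_smul, ← smul_sub, smul_smul, smul_eq_mul, abs_mul]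
      refine (mul_le_mul_of_nonneg_left (hL (s * t)) (abs_nonneg t)).trans_eq ?_
      rw [abs_mul, abs_of_nonneg hs.1, ← sq_abs t]
      ring
  rw [map_smul, smul_eq_mul, ← pder] at hmodel
  linarith

end PartialDerivatives

section StaleGradient

variable {K : ℕ} {g : (Fin K → ℝ) → ℝ}

/-- `M` bounds the error made by evaluating each partial derivative at its own outdated point: if
all the points `u k` lie within squared distance `S` of `y`, then the vector `(∂_k g (u k))_k` lies
within squared distance `M * S` of the gradient at `y`. -/
def StaleGradientBound (g : (Fin K → ℝ) → ℝ) (M : ℝ) : Prop :=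
  ∀ (y : Fin K → ℝ) (u : Fin K → Fin K → ℝ) (S : ℝ), (∀ k, sqnorm (y - u k) ≤ S) →
    ∑ k, (pder g k y - pder g k (u k)) ^ 2 ≤ M * S

lemma StaleGradientBound.min {M N : ℝ} (hM : StaleGradientBound g M)
    (hN : StaleGradientBound g N) : StaleGradientBound g (min M N) := fun y u S hS => by
  rcases min_choice M N with h | h <;> rw [h]
  exacts [hM y u S hS, hN y u S hS]

lemma staleGradientBound_of_lipschitz {Lip : ℝ}
    (hLip : ∀ x y : Fin K → ℝ,
      √(sqnorm fun k => pder g k x - pder g k y) ≤ Lip * √(sqnorm (x - y))) :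
    StaleGradientBound g (K * Lip ^ 2) := fun y u S hS => by
  have hcoord (k : Fin K) : (pder g k y - pder g k (u k)) ^ 2 ≤ Lip ^ 2 * S := calc
    (pder g k y - pder g k (u k)) ^ 2 ≤ sqnorm fun j => pder g j y - pder g j (u k) :=
      single_le_sum (f := fun j => (pder g j y - pder g j (u k)) ^ 2)
        (fun _ _ => sq_nonneg _) (mem_univ k)
    _ ≤ Lip ^ 2 * sqnorm (y - u k) := by
      simpa only [mul_pow, Real.sq_sqrt (sqnorm_nonneg _)] using
        pow_le_pow_left₀ (Real.sqrt_nonneg _) (hLip y (u k)) 2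
    _ ≤ Lip ^ 2 * S := mul_le_mul_of_nonneg_left (hS k) (sq_nonneg _)
  simpa [mul_assoc] using sum_le_sum fun k (_ : k ∈ univ) => hcoord k

lemma staleGradientBound_of_abs_pder2_le (hg : ContDiff ℝ 2 g) {B : Fin K → Fin K → ℝ}
    (hB : ∀ j k x, |pder2 g j k x| ≤ B j k) :
    StaleGradientBound g (∑ k, ∑ j, B j k ^ 2) := fun y u S hS => by
  rw [sum_mul]
  exact sum_le_sum fun k _ => (sq_pder_sub_le hg (hB · k) (u k) y).trans
    (mul_le_mul_of_nonneg_left (hS k) (sum_nonneg fun _ _ => sq_nonneg _))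

lemma sum_sum_sq_sqrt_mul {ι : Type*} [Fintype ι] {L : ι → ℝ} (hL : ∀ k, 0 ≤ L k) :
    ∑ k, ∑ j, √(L j * L k) ^ 2 = (∑ k, L k) ^ 2 := by
  simp only [Real.sq_sqrt (mul_nonneg (hL _) (hL _)), sq, sum_mul_sum, mul_comm]

end StaleGradient

section WeightedNorm

variable {K : ℕ} {P : Fin K → ℝ}

/-- The squared norm `‖v‖_P² = ∑ P_k v_k²` weighted by the stepsize parameters, in which the
progress of a cycle of coordinate gradient descent is measured. -/
noncomputable def weightedSqnorm (P v : Fin K → ℝ) : ℝ := ∑ k, P k * v k ^ 2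

lemma weightedSqnorm_nonneg (hP : ∀ k, 0 ≤ P k) (v : Fin K → ℝ) : 0 ≤ weightedSqnorm P v :=
  sum_nonneg fun k _ => mul_nonneg (hP k) (sq_nonneg _)

lemma mul_sqnorm_le_weightedSqnorm {m : ℝ} (hm : ∀ k, m ≤ P k) (v : Fin K → ℝ) :
    m * sqnorm v ≤ weightedSqnorm P v := by
  rw [sqnorm, mul_sum]
  exact sum_le_sum fun k _ => mul_le_mul_of_nonneg_right (hm k) (sq_nonneg _)

lemma weightedSqnorm_le_mul_sqnorm {A : ℝ} (hA : ∀ k, P k ≤ A) (v : Fin K → ℝ) :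
    weightedSqnorm P v ≤ A * sqnorm v := by
  rw [sqnorm, mul_sum]
  exact sum_le_sum fun k _ => mul_le_mul_of_nonneg_right (hA k) (sq_nonneg _)

lemma sum_mul_sub_mul_sub_eq_weightedSqnorm (P x y z : Fin K → ℝ) :
    ∑ k, P k * (x k - y k) * (y k - z k) =
      (weightedSqnorm P (x - z) - weightedSqnorm P (y - z) - weightedSqnorm P (y - x)) / 2 := by
  simp only [weightedSqnorm, ← sum_sub_distrib, sum_div, Pi.sub_apply]
  exact sum_congr rfl fun k _ => by ring

end WeightedNorm

lemma sum_castSucc_sub_succ {n : ℕ} {G : Type*} [AddCommGroup G] (f : Fin (n + 1) → G) :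
    ∑ k : Fin n, (f k.castSucc - f k.succ) = f 0 - f (Fin.last n) := by
  rw [sum_sub_distrib, sub_eq_sub_iff_add_eq_add]
  exact (Fin.sum_univ_castSucc f).symm.trans (Fin.sum_univ_succ f)

namespace CGDCycle

variable {K : ℕ} {g : (Fin K → ℝ) → ℝ} {P L x x' : Fin K → ℝ} {w : Fin (K + 1) → Fin K → ℝ}

lemma apply_eq_ite (h : CGDCycle g P x w x') (i : Fin (K + 1)) (j : Fin K) :
    w i j = if j.castSucc < i then x' j else x j := by
  obtain ⟨hzero, hsucc, hlast⟩ := h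
  have hupdate (i : Fin (K + 1)) : w i j = if j.castSucc < i then w j.succ j else x j := by
    induction i using Fin.induction with
    | zero => simp [hzero]
    | succ k ih =>
      rcases eq_or_ne j k with rfl | hjk
      · simp
      · have hlt : j.castSucc < k.succ ↔ j.castSucc < k.castSucc := by
          simpa using hjk.le_iff_lt
        simpa [hsucc k, hjk, hlt] using ih
  have hfinal : x' j = w j.succ j := by
    simpa [← hlast, Fin.castSucc_lt_last] using hupdate (Fin.last K)
  rw [hfinal, ← hupdate]

lemma sub_eq_inv_mul_pder (h : CGDCycle g P x w x') (k : Fin K) :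
    x k - x' k = (P k)⁻¹ * pder g k (w k.castSucc) := by
  have hk := congrFun (h.2.1 k) k
  simp only [Pi.sub_apply, Pi.smul_apply, Pi.single_eq_same, smul_eq_mul, mul_one,
    h.apply_eq_ite _ k, Fin.castSucc_lt_succ, lt_irrefl, if_true, if_false] at hk
  rw [hk, sub_sub_cancel]

lemma succ_eq_add_smul (h : CGDCycle g P x w x') (k : Fin K) :
    w k.succ = w k.castSucc + (x' k - x k) • (Pi.single k 1 : Fin K → ℝ) := by
  rw [h.2.1 k, ← h.sub_eq_inv_mul_pder, sub_eq_add_neg, ← neg_smul, neg_sub]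

lemma pder_eq (h : CGDCycle g P x w x') {k : Fin K} (hPk : P k ≠ 0) :
    pder g k (w k.castSucc) = P k * (x k - x' k) := by
  rw [h.sub_eq_inv_mul_pder, mul_inv_cancel_left₀ hPk]

lemma sqnorm_sub_le (h : CGDCycle g P x w x') (i : Fin (K + 1)) :
    sqnorm (x' - w i) ≤ sqnorm (x' - x) := by
  refine sum_le_sum fun j _ => ?_
  rw [Pi.sub_apply, h.apply_eq_ite]
  split_ifs
  · simpa using sq_nonneg (x' j - x j)
  · rfl

lemma half_weightedSqnorm_le_sub (h : CGDCycle g P x w x') (hg : Differentiable ℝ g)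
    (hL : ∀ (k : Fin K) (x : Fin K → ℝ) (t : ℝ),
      |pder g k (x + t • (Pi.single k 1 : Fin K → ℝ)) - pder g k x| ≤ L k * |t|)
    (hP : ∀ k, P k ≠ 0) (hLP : ∀ k, L k ≤ P k) :
    weightedSqnorm P (x' - x) / 2 ≤ g x - g x' := by
  have hstep (k : Fin K) : P k * (x' k - x k) ^ 2 / 2 ≤ g (w k.castSucc) - g (w k.succ) := by
    have hmodel := apply_add_smul_single_le hg (hL k (w k.castSucc)) (x' k - x k)
    rw [← h.succ_eq_add_smul, h.pder_eq (hP k)] at hmodel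
    linarith [mul_le_mul_of_nonneg_right (hLP k) (sq_nonneg (x' k - x k))]
  calc weightedSqnorm P (x' - x) / 2 = ∑ k, P k * (x' k - x k) ^ 2 / 2 := sum_div ..
    _ ≤ ∑ k : Fin K, (g (w k.castSucc) - g (w k.succ)) := sum_le_sum fun k _ => hstep k
    _ = g x - g x' := by rw [sum_castSucc_sub_succ fun i => g (w i), h.1, ← h.2.2]

lemma sub_le_weightedSqnorm_add (h : CGDCycle g P x w x') (hg : Differentiable ℝ g)
    (hgcv : ConvexOn ℝ Set.univ g) (hP : ∀ k, P k ≠ 0) (z : Fin K → ℝ) :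
    g x' - g z ≤
      (weightedSqnorm P (x - z) - weightedSqnorm P (x' - z) - weightedSqnorm P (x' - x)) / 2 +
        ∑ k, (pder g k x' - pder g k (w k.castSucc)) * (x' k - z k) := by
  refine (sub_le_fderiv_of_convexOn_univ hgcv (hg x') z).trans_eq ?_
  rw [fderiv_eq_sum_pder, ← sum_mul_sub_mul_sub_eq_weightedSqnorm, ← sum_add_distrib]
  refine sum_congr rfl fun k _ => ?_
  rw [h.pder_eq (hP k), Pi.sub_apply]
  ring

lemma sq_sum_stale_error_le (h : CGDCycle g P x w x') {M m : ℝ} (hM : StaleGradientBound g M)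
    (hM0 : 0 ≤ M) (hm : 0 < m) (hmP : ∀ k, m ≤ P k) (z : Fin K → ℝ) :
    (∑ k, (pder g k x' - pder g k (w k.castSucc)) * (x' k - z k)) ^ 2 ≤
      M / m * weightedSqnorm P (x' - x) * sqnorm (x' - z) := by
  refine (sum_mul_sq_le_sq_mul_sq _ _ _).trans
    (mul_le_mul_of_nonneg_right ?_ (sqnorm_nonneg (x' - z)))
  calc ∑ k, (pder g k x' - pder g k (w k.castSucc)) ^ 2
      ≤ M * sqnorm (x' - x) := hM _ _ _ fun k => h.sqnorm_sub_le k.castSucc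
    _ = M / m * (m * sqnorm (x' - x)) := by field_simp
    _ ≤ M / m * weightedSqnorm P (x' - x) :=
      mul_le_mul_of_nonneg_left (mul_sqnorm_le_weightedSqnorm hmP _) (div_nonneg hM0 hm.le)

end CGDCycle

section Rate

lemma mul_le_add_of_sq_le_mul {X b Q : ℝ} (hX : X ^ 2 ≤ b * Q) (hb : 0 ≤ b) (hQ : 0 ≤ Q) (c : ℝ) :
    c * X ≤ b + c ^ 2 * Q / 4 := by
  refine le_of_abs_le (abs_le_of_sq_le_sq ?_ (by positivity))
  calc (c * X) ^ 2 ≤ c ^ 2 * (b * Q) := by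
        rw [mul_pow]; exact mul_le_mul_of_nonneg_left hX (sq_nonneg c)
    _ = 4 * b * (c ^ 2 * Q / 4) := by ring
    _ ≤ (b + c ^ 2 * Q / 4) ^ 2 := four_mul_le_sq_add _ _

variable {δ T Q X : ℕ → ℝ} {b C : ℝ}

lemma potential_le_mul (hQ : ∀ s, 0 ≤ Q s) (hT : ∀ s, T s ≤ C)
    (hdescent : ∀ s, Q s / 2 ≤ δ s - δ (s + 1))
    (hgap : ∀ s, δ (s + 1) ≤ (T s - T (s + 1) - Q s) / 2 + X s)
    (hX : ∀ s, X s ^ 2 ≤ b * Q s) (hb : 0 ≤ b) (s : ℕ) :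
    (s : ℝ) * (s + 1) / 2 * δ s + s / 2 * T s ≤ s * (C / 2 + b) := by
  induction s with
  | zero => simp
  | succ s ih =>
    have hdescent' := mul_le_mul_of_nonneg_left (hdescent s)
      (by positivity : (0 : ℝ) ≤ s * (s + 1) / 2)
    have hgap' := mul_le_mul_of_nonneg_left (hgap s) (by positivity : (0 : ℝ) ≤ s + 1)
    have herror := mul_le_add_of_sq_le_mul (hX s) hb (hQ s) (s + 1)
    have hslack : 0 ≤ ((s : ℝ) + 1) * Q s := mul_nonneg (by positivity) (hQ s)
    push_cast
    linarith [hT s]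

lemma le_div_of_descent_of_gap (hQ : ∀ s, 0 ≤ Q s) (hT : ∀ s, T s ≤ C) (hT0 : ∀ s, 0 ≤ T s)
    (hdescent : ∀ s, Q s / 2 ≤ δ s - δ (s + 1))
    (hgap : ∀ s, δ (s + 1) ≤ (T s - T (s + 1) - Q s) / 2 + X s)
    (hX : ∀ s, X s ^ 2 ≤ b * Q s) (hb : 0 ≤ b) {r : ℕ} (hr : 1 ≤ r) :
    δ r ≤ (C + 2 * b) / (r + 1) := by
  have hr0 : (0 : ℝ) < r / 2 := half_pos (by exact_mod_cast hr)
  have hTr : 0 ≤ (r : ℝ) / 2 * T r := mul_nonneg hr0.le (hT0 r)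
  have hpot := potential_le_mul hQ hT hdescent hgap hX hb r
  rw [le_div_iff₀ (by positivity)]
  refine le_of_mul_le_mul_left ?_ hr0
  linarith

end Rate

section Iteration

variable {K : ℕ} {g : (Fin K → ℝ) → ℝ} {P L : Fin K → ℝ} {x : ℕ → Fin K → ℝ}
  {w : ℕ → Fin (K + 1) → Fin K → ℝ}

lemma cgd_antitone (hg : Differentiable ℝ g)
    (hL : ∀ (k : Fin K) (x : Fin K → ℝ) (t : ℝ),
      |pder g k (x + t • (Pi.single k 1 : Fin K → ℝ)) - pder g k x| ≤ L k * |t|)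
    (hP : ∀ k, 0 < P k) (hLP : ∀ k, L k ≤ P k)
    (hcycle : ∀ s, CGDCycle g P (x s) (w s) (x (s + 1))) : Antitone (g ∘ x) :=
  antitone_nat_of_succ_le fun s => by
    have hdescent := (hcycle s).half_weightedSqnorm_le_sub hg hL (fun k => (hP k).ne') hLP
    have hnonneg := weightedSqnorm_nonneg (fun k => (hP k).le) (x (s + 1) - x s)
    simp only [Function.comp_apply]
    linarith

lemma cgd_sub_le_div (hg : Differentiable ℝ g) (hgcv : ConvexOn ℝ Set.univ g)
    (hL : ∀ (k : Fin K) (x : Fin K → ℝ) (t : ℝ),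
      |pder g k (x + t • (Pi.single k 1 : Fin K → ℝ)) - pder g k x| ≤ L k * |t|)
    (hLP : ∀ k, L k ≤ P k) {M m A D : ℝ} (hM : StaleGradientBound g M) (hM0 : 0 ≤ M)
    (hm : 0 < m) (hmP : ∀ k, m ≤ P k) (hA : 0 ≤ A) (hPA : ∀ k, P k ≤ A)
    (hcycle : ∀ s, CGDCycle g P (x s) (w s) (x (s + 1))) {z : Fin K → ℝ}
    (hD : ∀ s, sqnorm (x s - z) ≤ D) {r : ℕ} (hr : 1 ≤ r) :
    g (x r) - g z ≤ (A * D + 2 * (M / m * D)) / (r + 1) := by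
  have hP (k : Fin K) : 0 < P k := hm.trans_le (hmP k)
  have hP0 (k : Fin K) : P k ≠ 0 := (hP k).ne'
  have hweighted := weightedSqnorm_nonneg fun k => (hP k).le
  have hB : 0 ≤ M / m := div_nonneg hM0 hm.le
  refine le_div_of_descent_of_gap (δ := fun s => g (x s) - g z)
    (T := fun s => weightedSqnorm P (x s - z)) (Q := fun s => weightedSqnorm P (x (s + 1) - x s))
    (fun s => hweighted _)
    (fun s => (weightedSqnorm_le_mul_sqnorm hPA _).trans (mul_le_mul_of_nonneg_left (hD s) hA))
    (fun s => hweighted _) (fun s => ?_)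
    (fun s => (hcycle s).sub_le_weightedSqnorm_add hg hgcv hP0 z) (fun s => ?_)
    (mul_nonneg hB ((sqnorm_nonneg _).trans (hD 0))) hr
  · simpa using (hcycle s).half_weightedSqnorm_le_sub hg hL hP0 hLP
  · refine ((hcycle s).sq_sum_stale_error_le hM hM0 hm hmP z).trans ?_
    rw [mul_right_comm]
    exact mul_le_mul_of_nonneg_right (mul_le_mul_of_nonneg_left (hD _) hB) (hweighted _)

end Iteration

section Stepsizes

variable {K : ℕ} {P : Fin K → ℝ} (hK : 1 ≤ K)

lemma le_maxOf (k : Fin K) : P k ≤ maxOf hK P := le_sup' P (mem_univ k)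

lemma maxOf_nonneg (hP : ∀ k, 0 ≤ P k) : 0 ≤ maxOf hK P := (hP ⟨0, hK⟩).trans (le_maxOf hK _)

lemma minOf_nonneg (hP : ∀ k, 0 ≤ P k) : 0 ≤ minOf hK P := le_inf' _ _ fun k _ => hP k

lemma nonneg_of_abs_pder_sub_le {g : (Fin K → ℝ) → ℝ} {k : Fin K} {L : ℝ}
    (hL : ∀ (x : Fin K → ℝ) (t : ℝ),
      |pder g k (x + t • (Pi.single k 1 : Fin K → ℝ)) - pder g k x| ≤ L * |t|) : 0 ≤ L := by
  simpa using (abs_nonneg _).trans (hL 0 1)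

lemma stepsizes_pos_or_const {g : (Fin K → ℝ) → ℝ} {L z : Fin K → ℝ} (hg : ContDiff ℝ 2 g)
    (hL : ∀ k, 0 ≤ L k) (hH : ∀ i j x, |pder2 g i j x| ≤ √(L i * L j))
    (hP : ∀ k, maxOf hK L ≤ P k) (hz : IsLocalMin g z) :
    (∀ k, 0 < P k) ∨ ∀ x y, g x = g y := by
  refine (maxOf_nonneg hK hL).lt_or_eq.imp (fun hpos k => hpos.trans_le (hP k)) fun hzero => ?_
  have hLzero (k : Fin K) : L k = 0 := ((le_maxOf hK k).trans_eq hzero.symm).antisymm (hL k)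
  exact apply_eq_of_pder2_eq_zero hg (fun i j x => by simpa [hLzero] using hH i j x) hz

end Stepsizes

theorem cgd_rate_concrete_general {K : ℕ} (hK : 1 ≤ K)
    (g : (Fin K → ℝ) → ℝ) (hg : ContDiff ℝ 2 g) (hgcv : ConvexOn ℝ Set.univ g)
    (Lip : ℝ)
    (hgLip : ∀ x y : Fin K → ℝ,
      Real.sqrt (sqnorm (fun k => pder g k x - pder g k y)) ≤
        Lip * Real.sqrt (sqnorm (x - y)))
    (L : Fin K → ℝ)
    (hLip : ∀ (k : Fin K) (x : Fin K → ℝ) (t : ℝ),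
      |pder g k (x + t • (Pi.single k 1 : Fin K → ℝ)) - pder g k x| ≤ L k * |t|)
    (hH : ∀ (i j : Fin K) (x : Fin K → ℝ), |pder2 g i j x| ≤ Real.sqrt (L i * L j))
    (P : Fin K → ℝ) (hP : ∀ k, 0 < P k) (hLP : ∀ k, L k ≤ P k)
    (z : Fin K → ℝ)
    (x : ℕ → Fin K → ℝ) (w : ℕ → Fin (K + 1) → Fin K → ℝ)
    (hcycle : ∀ r : ℕ, CGDCycle g P (x r) (w r) (x (r + 1)))
    (R0 : ℝ) (hR0 : ∀ s, Real.sqrt (sqnorm (x s - z)) ≤ R0)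
    (r : ℕ) (hr : 1 ≤ r) :
    g (x r) - g z ≤
      2 * (maxOf hK P +
        min ((K : ℝ) * Lip ^ 2) ((∑ k, L k) ^ 2) / minOf hK P) * R0 ^ 2 / r := by
  have hM : StaleGradientBound g (min (K * Lip ^ 2) ((∑ k, L k) ^ 2)) := by
    rw [← sum_sum_sq_sqrt_mul fun k => nonneg_of_abs_pder_sub_le (hLip k)]
    exact (staleGradientBound_of_lipschitz hgLip).min (staleGradientBound_of_abs_pder2_le hg hH)
  have hM0 : 0 ≤ min ((K : ℝ) * Lip ^ 2) ((∑ k, L k) ^ 2) := by positivity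
  have hA : 0 ≤ maxOf hK P := maxOf_nonneg hK fun k => (hP k).le
  have hm : 0 < minOf hK P := (lt_inf'_iff _).2 fun k _ => hP k
  have hD (s : ℕ) : sqnorm (x s - z) ≤ R0 ^ 2 := (Real.sqrt_le_iff.1 (hR0 s)).2
  refine (cgd_sub_le_div (hg.differentiable two_ne_zero) hgcv hLip hLP hM hM0 hm
    (fun k => inf'_le P (mem_univ k)) hA (le_maxOf hK) hcycle hD hr).trans
    (div_le_div₀ (by positivity) ?_ (by exact_mod_cast hr) (by linarith))
  linarith [mul_nonneg hA (sq_nonneg R0)]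

/-- Corollary 1: cyclic CGD with stepsizes `P_k ≥ L_max`
satisfies `g(x^{(r)}) − g(x*) ≤ 2 (P_max + min{K L², (Σ_k L_k)²}/P_min) R_0² / r`
for all `r ≥ 1`. -/
theorem cgd_rate_concrete {K : ℕ} (hK : 1 ≤ K)
    (g : (Fin K → ℝ) → ℝ) (hg : ContDiff ℝ 2 g) (hgcv : ConvexOn ℝ Set.univ g)
    (Lip : ℝ)
    (hgLip : ∀ x y : Fin K → ℝ,
      Real.sqrt (sqnorm (fun k => pder g k x - pder g k y)) ≤
        Lip * Real.sqrt (sqnorm (x - y)))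
    (L : Fin K → ℝ)
    (hLip : ∀ (k : Fin K) (x : Fin K → ℝ) (t : ℝ),
      |pder g k (x + t • (Pi.single k 1 : Fin K → ℝ)) - pder g k x| ≤ L k * |t|)
    (hH : ∀ (i j : Fin K) (x : Fin K → ℝ), |pder2 g i j x| ≤ Real.sqrt (L i * L j))
    (P : Fin K → ℝ) (hP : ∀ k, maxOf hK L ≤ P k)
    (xstar : Fin K → ℝ) (hxstar : ∀ y : Fin K → ℝ, g xstar ≤ g y)
    (x : ℕ → Fin K → ℝ) (w : ℕ → Fin (K + 1) → Fin K → ℝ)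
    (hcycle : ∀ r : ℕ, CGDCycle g P (x r) (w r) (x (r + 1)))
    (R0 : ℝ)
    (hR0 : ∀ z : Fin K → ℝ, g z ≤ g (x 0) →
      ∀ y : Fin K → ℝ, (∀ y' : Fin K → ℝ, g y ≤ g y') →
        Real.sqrt (sqnorm (z - y)) ≤ R0)
    (r : ℕ) (hr : 1 ≤ r) :
    g (x r) - g xstar ≤
      2 * (maxOf hK P +
        min ((K : ℝ) * Lip ^ 2) ((∑ k, L k) ^ 2) / minOf hK P) * R0 ^ 2 / r := by
  have hL0 (k : Fin K) : 0 ≤ L k := nonneg_of_abs_pder_sub_le (hLip k)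
  have hLP (k : Fin K) : L k ≤ P k := (le_maxOf hK k).trans (hP k)
  obtain hP0 | hconst := stepsizes_pos_or_const hK hg hL0 hH hP (.of_forall hxstar)
  · have hanti := cgd_antitone (hg.differentiable two_ne_zero) hLip hP0 hLP hcycle
    exact cgd_rate_concrete_general hK g hg hgcv Lip hgLip L hLip hH P hP0 hLP xstar x w hcycle R0
      (fun s => hR0 (x s) (hanti s.zero_le) xstar hxstar) r hr
  · have hPmax := maxOf_nonneg hK fun k => (hL0 k).trans (hLP k)
    have hPmin := minOf_nonneg hK fun k => (hL0 k).trans (hLP k)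
    rw [hconst (x r) xstar, sub_self]
    positivity
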